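/- arXiv:2410.02816 — 3 statements merged into one kernel-verified Lean document; each statement's English description precedes it below -/
import Mathlib

section
/- Let b ∈ (0,1] and suppose the bipolar max-product fuzzy relation equation max_{j=1..m} max(a_j^+ · x_j, a_j^- · n_P(x_j)) = b is solvable. If there exist k_1, k_2 ∈ {1,...,m} such that a_{k_1}^- = b and a_{k_2}^- > b, then the set of solutions of the equation has no minimal elements. -/
open Finset
open scoped Classical

/-- Product negation: `nP 0 = 1`, `nP x = 0` for `x ≠ 0`. -/
noncomputable def nP (x : ℝ) : ℝ := if x = 0 then 1 else 0

/-- Residuated implication of the product: `resP z x = min 1 (z / x)` for `x > 0`,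
and `resP z 0 = 1`. -/
noncomputable def resP (z x : ℝ) : ℝ := if x = 0 then 1 else min 1 (z / x)

/-- Left-hand side of a bipolar max-product fuzzy relation equation:
`max_{j=1..m} max (a_j^+ * x_j) (a_j^- * nP (x_j))`. -/
noncomputable def eqLHS {m : ℕ} (hm : 0 < m) (ap an : Fin m → ℝ) (x : Fin m → ℝ) : ℝ :=
  Finset.univ.sup' ⟨⟨0, hm⟩, Finset.mem_univ _⟩
    (fun j => max (ap j * x j) (an j * nP (x j)))

/-- `x` is a solution of the bipolar max-product FRE with independent term `b`. -/
def IsSol {m : ℕ} (hm : 0 < m) (ap an : Fin m → ℝ) (b : ℝ) (x : Fin m → ℝ) : Prop :=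
  (∀ j, x j ∈ Set.Icc (0:ℝ) 1) ∧ eqLHS hm ap an x = b

/-! The product negation only sees whether a coordinate vanishes, so shrinking all coordinates of a
solution by a factor in `(0, 1]` keeps the left-hand side at most `b`; if `a_k⁻ = b`, setting the
`k`-th coordinate to `0` then brings it back to exactly `b`. Hence `0` is the only candidate for a
minimal solution, and `b < a_k⁻` for some `k` excludes it. -/

theorem nP_zero : nP 0 = 1 := if_pos rfl

theorem nP_mul_of_ne_zero {c : ℝ} (hc : c ≠ 0) (x : ℝ) : nP (c * x) = nP x := by
  simp only [nP, mul_eq_zero, hc, false_or]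

section

variable {m : ℕ} {hm : 0 < m} {ap an x : Fin m → ℝ} {b c : ℝ} {k : Fin m}

theorem eqLHS_le_iff :
    eqLHS hm ap an x ≤ b ↔ ∀ j, ap j * x j ≤ b ∧ an j * nP (x j) ≤ b :=
  (sup'_le_iff _ _).trans (by simp only [mem_univ, forall_const, max_le_iff])

theorem le_eqLHS_of_eq_zero (hk : x k = 0) : an k ≤ eqLHS hm ap an x := by
  simpa only [hk, nP_zero, mul_one] using (eqLHS_le_iff.mp (le_refl (eqLHS hm ap an x)) k).2

theorem eqLHS_smul_le (hb : 0 ≤ b) (hc₀ : 0 < c) (hc₁ : c ≤ 1) (hx : eqLHS hm ap an x ≤ b) :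
    eqLHS hm ap an (c • x) ≤ b := by
  refine eqLHS_le_iff.mpr fun j => ?_
  obtain ⟨hpos, hneg⟩ := eqLHS_le_iff.mp hx j
  rw [Pi.smul_apply, smul_eq_mul]
  constructor
  · calc ap j * (c * x j) = c * (ap j * x j) := mul_left_comm _ _ _
      _ ≤ c * b := mul_le_mul_of_nonneg_left hpos hc₀.le
      _ ≤ b := mul_le_of_le_one_left hb hc₁
  · rwa [nP_mul_of_ne_zero hc₀.ne']

theorem eqLHS_update_zero (hk : 0 ≤ an k) (hx : eqLHS hm ap an x ≤ an k) :
    eqLHS hm ap an (Function.update x k 0) = an k := by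
  refine le_antisymm (eqLHS_le_iff.mpr fun j => ?_)
    (le_eqLHS_of_eq_zero (Function.update_self k 0 x))
  rcases eq_or_ne j k with rfl | hjk
  · simpa only [Function.update_self, mul_zero, nP_zero, mul_one, le_refl, and_true] using hk
  · simpa only [Function.update_of_ne hjk] using eqLHS_le_iff.mp hx j

namespace IsSol

theorem ne_zero_of_lt (hx : IsSol hm ap an b x) (hk : b < an k) : x ≠ 0 := by
  rintro rfl
  exact (hk.trans_le (le_eqLHS_of_eq_zero rfl)).ne' hx.2

theorem update_smul (hx : IsSol hm ap an b x) (hb : 0 ≤ b) (hk : an k = b) (hc₀ : 0 < c)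
    (hc₁ : c ≤ 1) : IsSol hm ap an b (Function.update (c • x) k 0) := by
  refine ⟨fun j => ?_, ?_⟩
  · rcases eq_or_ne j k with rfl | hjk
    · simp only [Function.update_self, Set.left_mem_Icc, zero_le_one]
    · rw [Function.update_of_ne hjk, Pi.smul_apply, smul_eq_mul]
      exact ⟨mul_nonneg hc₀.le (hx.1 j).1, mul_le_one₀ hc₁ (hx.1 j).1 (hx.1 j).2⟩
  · subst hk
    exact eqLHS_update_zero hb (eqLHS_smul_le hb hc₀ hc₁ hx.2.le)

theorem exists_lt_of_ne_zero (hx : IsSol hm ap an b x) (hb : 0 ≤ b) (hk : an k = b)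
    (hx₀ : x ≠ 0) : ∃ y, IsSol hm ap an b y ∧ y < x := by
  have x_nonneg : 0 ≤ x := fun j => (hx.1 j).1
  have half_lt : (1 / 2 : ℝ) • x < x :=
    smul_lt_of_lt_one_left (x_nonneg.lt_of_ne' hx₀) one_half_lt_one
  have update_le : Function.update ((1 / 2 : ℝ) • x) k 0 ≤ (1 / 2 : ℝ) • x :=
    update_le_self_iff.mpr (smul_nonneg one_half_pos.le x_nonneg k)
  exact ⟨_, hx.update_smul hb hk one_half_pos one_half_lt_one.le, update_le.trans_lt half_lt⟩

end IsSol

end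

theorem stmt5_general {m : ℕ} (hm : 0 < m) (ap an : Fin m → ℝ) {b : ℝ} (hb : 0 ≤ b)
    {k₁ k₂ : Fin m} (h₁ : an k₁ = b) (h₂ : b < an k₂) :
    ∀ x, IsSol hm ap an b x → ∃ y, IsSol hm ap an b y ∧ y < x :=
  fun _ hx => hx.exists_lt_of_ne_zero hb h₁ (hx.ne_zero_of_lt h₂)

theorem stmt5 (m : ℕ) (hm : 0 < m) (ap an : Fin m → ℝ)
    (hap : ∀ j, ap j ∈ Set.Icc (0:ℝ) 1) (han : ∀ j, an j ∈ Set.Icc (0:ℝ) 1)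
    (b : ℝ) (hb0 : 0 < b) (hb1 : b ≤ 1)
    (hsolv : ∃ x, IsSol hm ap an b x)
    (k₁ k₂ : Fin m) (h₁ : an k₁ = b) (h₂ : b < an k₂) :
    ∀ x, IsSol hm ap an b x → ∃ y, IsSol hm ap an b y ∧ y < x :=
  stmt5_general hm ap an hb0.le h₁ h₂
end

section
/- Consider a solvable system of bipolar max-product fuzzy relation equations max_{j=1..m} max(a_{ij}^+ · x_j, a_{ij}^- · n_P(x_j)) = b_i, i ∈ {1,...,n}, and suppose (x̂_1,...,x̂_m) is a minimal solution of the system. Then for every j ∈ {1,...,m} with x̂_j > 0, it holds that x̂_j = min{b_h ←_P a_{hj}^+ : h ∈ {1,...,n}}. -/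
open Finset
open scoped Classical

/-- `x` is a solution of the system of bipolar max-product FREs with coefficient
matrices `ap`, `an` and independent terms `b`. -/
def SysSol {m n : ℕ} (hm : 0 < m) (ap an : Fin n → Fin m → ℝ) (b : Fin n → ℝ)
    (x : Fin m → ℝ) : Prop :=
  (∀ j, x j ∈ Set.Icc (0:ℝ) 1) ∧ ∀ i, eqLHS hm (ap i) (an i) x = b i

/-- `(Jp, Jm)` is a feasible pair of index sets with respect to the system. -/
def FeasiblePair {m n : ℕ} (ap an : Fin n → Fin m → ℝ) (b : Fin n → ℝ)
    (Jp Jm : Finset (Fin m)) : Prop :=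
  Jp ∪ Jm = Finset.univ ∧ Jp ∩ Jm = ∅ ∧
    ∀ i,
      (b i = 0 → (∀ j ∈ Jp, ap i j = 0) ∧ ∀ j ∈ Jm, an i j = 0) ∧
      (0 < b i →
        (∃ j ∈ Jp, b i ≤ ap i j ∧ ∀ h, resP (b i) (ap i j) ≤ resP (b h) (ap h j)) ∨
        (∃ j ∈ Jm, an i j = b i ∧ ∀ h, an h j ≤ b h))

/-!
Once `x j` is positive, lowering it to another positive value `t` affects the `i`-th equation only
by replacing the product `ap i j * x j` with the smaller `ap i j * t`, and this can destroy the
equation only if `ap i j * x j` is equal to `b i` and `ap i j ≠ 0`. A minimal solution cannot be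
lowered, so `x j` has to attain one of the bounds `x j ≤ resP (b i) (ap i j)` that hold for every
solution.
-/

theorem isLUB_range_update {κ α : Type*} [DecidableEq κ] [LinearOrder α] {f : κ → α} {b y : α}
    {j : κ} (hf : IsLUB (Set.range f) b) (hy : y ≤ b) (hj : f j < b) :
    IsLUB (Set.range (Function.update f j y)) b := by
  refine ⟨Set.forall_mem_range.2 ?_, fun u hu => ?_⟩
  · exact (Function.forall_update_iff f (p := fun _ z => z ≤ b)).2
      ⟨hy, fun k _ => hf.1 ⟨k, rfl⟩⟩
  · have hu' : ∀ k ≠ j, f k ≤ u :=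
      ((Function.forall_update_iff f (p := fun _ z => z ≤ u)).1 (Set.forall_mem_range.1 hu)).2
    have hb : b ≤ max u (f j) := hf.2 <| Set.forall_mem_range.2 fun k => by
      rcases eq_or_ne k j with rfl | hk
      · exact le_max_right _ _
      · exact le_max_of_le_left (hu' k hk)
    exact (le_max_iff.1 hb).resolve_right hj.not_ge

theorem eq_inf'_of_isLeast_range {ι α : Type*} [Fintype ι] [LinearOrder α] {f : ι → α} {a : α}
    (hι : (Finset.univ : Finset ι).Nonempty) (h : IsLeast (Set.range f) a) :
    a = Finset.univ.inf' hι f := by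
  obtain ⟨⟨i, rfl⟩, hle⟩ := h
  exact le_antisymm (Finset.le_inf' _ _ fun k _ => hle ⟨k, rfl⟩)
    (Finset.inf'_le _ (Finset.mem_univ i))

theorem le_resP_of_mul_le {a x z : ℝ} (ha : 0 ≤ a) (hx : x ≤ 1) (h : a * x ≤ z) :
    x ≤ resP z a := by
  unfold resP
  split_ifs with h0
  · exact hx
  · exact le_min hx ((le_div_iff₀' (ha.lt_of_ne' h0)).2 h)

theorem mul_lt_of_lt_resP {a x z : ℝ} (ha : 0 < a) (h : x < resP z a) : a * x < z := by
  rw [resP, if_neg ha.ne'] at h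
  exact (lt_div_iff₀' ha).1 (lt_min_iff.1 h).2

/-- The contribution `max (a⁺ * x) (a⁻ * nP x)` of a single unknown `x` to the left-hand side of a
bipolar equation. -/
noncomputable def bipolarTerm (ap an x : ℝ) : ℝ := max (ap * x) (an * nP x)

theorem mul_le_bipolarTerm (ap an x : ℝ) : ap * x ≤ bipolarTerm ap an x := le_max_left _ _

theorem bipolarTerm_of_pos {ap x : ℝ} (an : ℝ) (ha : 0 ≤ ap) (hx : 0 < x) :
    bipolarTerm ap an x = ap * x := by
  rw [bipolarTerm, nP, if_neg hx.ne', mul_zero, max_eq_left (mul_nonneg ha hx.le)]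

/-- `x` is a solution in `[0, 1]` of the bipolar sup-product system indexed by arbitrary types `ι`
of equations and `κ` of unknowns. This extends `SysSol`, the maximum over the unknowns becoming a
least upper bound that need not be attained. -/
def IsBipolarSolution {ι κ : Type*} (ap an : ι → κ → ℝ) (b : ι → ℝ) (x : κ → ℝ) : Prop :=
  (∀ j, x j ∈ Set.Icc (0 : ℝ) 1) ∧
    ∀ i, IsLUB (Set.range fun j => bipolarTerm (ap i j) (an i j) (x j)) (b i)

namespace IsBipolarSolution

variable {ι κ : Type*} {ap an : ι → κ → ℝ} {b : ι → ℝ} {x : κ → ℝ}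

theorem bipolarTerm_le (hx : IsBipolarSolution ap an b x) (i : ι) (j : κ) :
    bipolarTerm (ap i j) (an i j) (x j) ≤ b i :=
  (hx.2 i).1 ⟨j, rfl⟩

theorem le_resP (hx : IsBipolarSolution ap an b x) {i : ι} {j : κ} (ha : 0 ≤ ap i j) :
    x j ≤ resP (b i) (ap i j) :=
  le_resP_of_mul_le ha (hx.1 j).2 ((mul_le_bipolarTerm _ _ _).trans (hx.bipolarTerm_le i j))

theorem update [DecidableEq κ] (hx : IsBipolarSolution ap an b x) {j : κ} {t : ℝ}
    (ha : ∀ i, 0 ≤ ap i j) (ht : 0 < t) (htx : t ≤ x j) (hlt : ∀ i, x j < resP (b i) (ap i j)) :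
    IsBipolarSolution ap an b (Function.update x j t) := by
  have hxj : 0 < x j := ht.trans_le htx
  refine ⟨?_, fun i => ?_⟩
  · exact (Function.forall_update_iff x (p := fun _ z => z ∈ Set.Icc (0 : ℝ) 1)).2
      ⟨⟨ht.le, htx.trans (hx.1 j).2⟩, fun k _ => hx.1 k⟩
  · simp only [Function.apply_update (fun k => bipolarTerm (ap i k) (an i k))]
    have hterm_t := bipolarTerm_of_pos (an i j) (ha i) ht
    have hterm_x := bipolarTerm_of_pos (an i j) (ha i) hxj
    rcases (ha i).eq_or_lt with h0 | hpos
    · have hsame : bipolarTerm (ap i j) (an i j) t = bipolarTerm (ap i j) (an i j) (x j) := by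
        rw [hterm_t, hterm_x, ← h0, zero_mul, zero_mul]
      simpa only [hsame, Function.update_eq_self] using hx.2 i
    · have hslack : ap i j * x j < b i := mul_lt_of_lt_resP hpos (hlt i)
      refine isLUB_range_update (hx.2 i) ?_ (hterm_x.trans_lt hslack)
      calc bipolarTerm (ap i j) (an i j) t = ap i j * t := hterm_t
        _ ≤ ap i j * x j := by gcongr
        _ ≤ b i := hslack.le

end IsBipolarSolution

theorem isLUB_range_bipolarTerm_eqLHS {m : ℕ} (hm : 0 < m) (ap an x : Fin m → ℝ) :
    IsLUB (Set.range fun j => bipolarTerm (ap j) (an j) (x j)) (eqLHS hm ap an x) := by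
  have : Nonempty (Fin m) := ⟨⟨0, hm⟩⟩
  rw [eqLHS, Finset.sup'_univ_eq_ciSup]
  exact isLUB_ciSup (Set.finite_range _).bddAbove

theorem sysSol_iff_isBipolarSolution {m n : ℕ} (hm : 0 < m) {ap an : Fin n → Fin m → ℝ}
    {b : Fin n → ℝ} {x : Fin m → ℝ} : SysSol hm ap an b x ↔ IsBipolarSolution ap an b x :=
  and_congr_right fun _ => forall_congr' fun i =>
    ⟨fun h => h ▸ isLUB_range_bipolarTerm_eqLHS hm (ap i) (an i) x,
      (isLUB_range_bipolarTerm_eqLHS hm (ap i) (an i) x).unique⟩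

theorem minimal_isBipolarSolution {m n : ℕ} (hm : 0 < m) {ap an : Fin n → Fin m → ℝ}
    {b : Fin n → ℝ} {x : Fin m → ℝ} (hx : SysSol hm ap an b x)
    (hmin : ∀ y, SysSol hm ap an b y → ¬ y < x) : Minimal (IsBipolarSolution ap an b) x := by
  simp only [minimal_iff_forall_lt, ← sysSol_iff_isBipolarSolution hm]
  exact ⟨hx, fun y hlt hy => hmin y hy hlt⟩

theorem stmt18_general {ι κ : Type*} {ap an : ι → κ → ℝ} {b : ι → ℝ} {x : κ → ℝ} {j : κ}
    (ha : ∀ i, 0 ≤ ap i j) (hx : Minimal (IsBipolarSolution ap an b) x) (hj : 0 < x j) :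
    IsLeast (Set.range fun i => resP (b i) (ap i j)) (x j) := by
  have hbound : ∀ i, x j ≤ resP (b i) (ap i j) := fun i => hx.prop.le_resP (ha i)
  refine ⟨?_, Set.forall_mem_range.2 hbound⟩
  by_contra hne
  have hlt : ∀ i, x j < resP (b i) (ap i j) := fun i =>
    (hbound i).lt_of_ne' fun h => hne ⟨i, h⟩
  have hhalf : IsBipolarSolution ap an b (Function.update x j (x j / 2)) :=
    hx.prop.update ha (half_pos hj) (half_le_self hj.le) hlt
  exact hx.not_prop_of_lt (update_lt_self_iff.2 (half_lt_self hj)) hhalf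

theorem stmt18 (m n : ℕ) (hm : 0 < m) (hn : 0 < n)
    (ap an : Fin n → Fin m → ℝ) (b : Fin n → ℝ)
    (hap : ∀ i j, ap i j ∈ Set.Icc (0:ℝ) 1) (han : ∀ i j, an i j ∈ Set.Icc (0:ℝ) 1)
    (hb : ∀ i, b i ∈ Set.Icc (0:ℝ) 1)
    (hsolv : ∃ x, SysSol hm ap an b x)
    (xhat : Fin m → ℝ)
    (hsol : SysSol hm ap an b xhat)
    (hmin : ∀ y, SysSol hm ap an b y → ¬ y < xhat) :
    ∀ j, 0 < xhat j → xhat j = Finset.univ.inf' ⟨⟨0, hn⟩, Finset.mem_univ _⟩ (fun h => resP (b h) (ap h j)) := by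
  intro j hj
  exact eq_inf'_of_isLeast_range _
    (stmt18_general (fun i => (hap i j).1) (minimal_isBipolarSolution hm hsol hmin) hj)
end

section
/- Consider a solvable system of bipolar max-product fuzzy relation equations max_{j=1..m} max(a_{ij}^+ · x_j, a_{ij}^- · n_P(x_j)) = b_i, i ∈ {1,...,n}, and let S^- = {J^- ⊆ {1,...,m} : (J^+, J^-) is a feasible pair for some J^+ ⊆ {1,...,m}}. If (x̂_1,...,x̂_m) is a minimal solution of the system, then the set Ĵ^- = {j ∈ {1,...,m} : x̂_j = 0} is a maximal element of S^- with respect to set inclusion. -/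
open Finset
open scoped Classical

/-!
Everything rests on lowering a solution `x` on a set `K` of indices: send `x j` to `0` where the
coefficients `an h j` permit it and halve it elsewhere, so that no left-hand side exceeds its
right-hand side. The result is again a solution as soon as every equation with `0 < b i` stays
attained, in which case a minimal `x` must already vanish on `K`.

Lowering `x` at its zeros and at one more index shows that every nonzero `x j` is forced by some
equation, `ap h j * x j = b h > 0`, so that `x j = resP (b h) (ap h j)`. Now let `(Jp, K)` be a
feasible pair such that `K` contains the zeros of `x`. If feasibility attains the `i`-th equation at
`j ∈ Jp`, then `resP (b i) (ap i j) ≤ resP (b h) (ap h j) = x j`, so `x` attains it at `j` as well;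
otherwise it is attained by letting an index of `K` vanish. Hence `x` can be lowered on `K`, and
therefore `K` consists of zeros of `x`.
-/

section Residuum

variable {a x z : ℝ}

lemma le_resP (ha : 0 ≤ a) (hx : x ≤ 1) (h : a * x ≤ z) : x ≤ resP z a := by
  rw [resP]
  split_ifs with ha0
  · exact hx
  · exact le_min hx ((le_div_iff₀' (ha.lt_of_ne' ha0)).2 h)

lemma resP_mul_left (ha : a ≠ 0) (hx : x ≤ 1) : resP (a * x) a = x := by
  rw [resP, if_neg ha, mul_div_cancel_left₀ x ha, min_eq_right hx]

lemma mul_resP (ha : 0 < a) (hza : z ≤ a) : a * resP z a = z := by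
  rw [resP, if_neg ha.ne', min_eq_right ((div_le_one ha).2 hza), mul_div_cancel₀ z ha.ne']

end Residuum

section Term

variable {a c d x : ℝ}

lemma max_mul_nP_le_iff (hax : 0 ≤ a * x) :
    max (a * x) (c * nP x) ≤ d ↔ a * x ≤ d ∧ (x = 0 → c ≤ d) := by
  by_cases hx : x = 0
  · simp [nP, hx]
  · simpa [nP, hx] using hax.trans

lemma le_max_mul_nP_iff (hax : 0 ≤ a * x) :
    d ≤ max (a * x) (c * nP x) ↔ d ≤ a * x ∨ x = 0 ∧ d ≤ c := by
  by_cases hx : x = 0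
  · simp [nP, hx]
  · simpa [nP, hx] using fun hd : d ≤ 0 => hd.trans hax

end Term

section Lowering

variable {ι κ : Type*} {K : Set ι} {an : κ → ι → ℝ} {b : κ → ℝ} {x : ι → ℝ} {j : ι}

/-- The tuple `x` lowered on `K`: a component with index in `K` becomes `0` if the coefficients
`an i j` allow it to vanish in a solution, and is halved otherwise. Halving is an arbitrary way of
decreasing a positive component while keeping it positive. -/
noncomputable def lowerOn (K : Set ι) (an : κ → ι → ℝ) (b : κ → ℝ) (x : ι → ℝ) : ι → ℝ :=
  fun j => if j ∈ K then if ∀ i, an i j ≤ b i then 0 else x j / 2 else x j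

lemma lowerOn_of_notMem (hj : j ∉ K) : lowerOn K an b x j = x j := if_neg hj

lemma lowerOn_of_forall_le (hj : j ∈ K) (han : ∀ i, an i j ≤ b i) : lowerOn K an b x j = 0 := by
  rw [lowerOn, if_pos hj, if_pos han]

lemma lowerOn_nonneg (hx : 0 ≤ x j) : 0 ≤ lowerOn K an b x j := by
  rw [lowerOn]
  split_ifs <;> positivity

lemma lowerOn_le (hx : 0 ≤ x j) : lowerOn K an b x j ≤ x j := by
  rw [lowerOn]
  split_ifs <;> linarith

lemma lowerOn_lt (hj : j ∈ K) (hx : 0 < x j) : lowerOn K an b x j < x j := by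
  rw [lowerOn, if_pos hj]
  split_ifs <;> linarith

lemma forall_le_of_lowerOn_eq_zero (hx : x j ≠ 0) (h : lowerOn K an b x j = 0) (i : κ) :
    an i j ≤ b i := by
  rw [lowerOn] at h
  split_ifs at h with hj han
  · exact han i
  · exact absurd h (div_ne_zero hx two_ne_zero)
  · exact absurd h hx

end Lowering

section Solutions

variable {m n : ℕ} {hm : 0 < m} {ap an : Fin n → Fin m → ℝ} {b : Fin n → ℝ} {x : Fin m → ℝ}
  {i : Fin n} {j : Fin m}

lemma eqLHS_eq_iff {ap an : Fin m → ℝ} {c : ℝ} (hapx : ∀ j, 0 ≤ ap j * x j) :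
    eqLHS hm ap an x = c ↔ (∀ j, ap j * x j ≤ c) ∧ (∀ j, x j = 0 → an j ≤ c) ∧
      ∃ j, c ≤ ap j * x j ∨ x j = 0 ∧ c ≤ an j := by
  have hne : (univ : Finset (Fin m)).Nonempty := ⟨⟨0, hm⟩, mem_univ _⟩
  -- `eqLHS` records nonemptiness as a bare existential, on which the `sup'` lemmas fail to fire.
  change univ.sup' hne (fun j => max (ap j * x j) (an j * nP (x j))) = c ↔ _
  rw [le_antisymm_iff]
  simp only [sup'_le_iff, le_sup'_iff, mem_univ, true_and, forall_const,
    max_mul_nP_le_iff (hapx _), le_max_mul_nP_iff (hapx _), forall_and, and_assoc]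

lemma sysSol_iff (hap : ∀ i j, 0 ≤ ap i j) :
    SysSol hm ap an b x ↔ (∀ j, x j ∈ Set.Icc (0 : ℝ) 1) ∧ ∀ i,
      (∀ j, ap i j * x j ≤ b i) ∧ (∀ j, x j = 0 → an i j ≤ b i) ∧
        ∃ j, b i ≤ ap i j * x j ∨ x j = 0 ∧ b i ≤ an i j :=
  and_congr_right fun hx => forall_congr' fun i =>
    eqLHS_eq_iff fun j => mul_nonneg (hap i j) (hx j).1

namespace SysSol

lemma max_mul_nP_le (hx : SysSol hm ap an b x) (i : Fin n) (j : Fin m) :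
    max (ap i j * x j) (an i j * nP (x j)) ≤ b i :=
  (le_sup' (fun k => max (ap i k * x k) (an i k * nP (x k))) (mem_univ j)).trans (hx.2 i).le

lemma mul_le (hx : SysSol hm ap an b x) (i : Fin n) (j : Fin m) : ap i j * x j ≤ b i :=
  (max_le_iff.1 (hx.max_mul_nP_le i j)).1

lemma le_of_eq_zero (hx : SysSol hm ap an b x) (hj : x j = 0) (i : Fin n) : an i j ≤ b i := by
  simpa [nP, hj] using (max_le_iff.1 (hx.max_mul_nP_le i j)).2

lemma exists_attained (hx : SysSol hm ap an b x) (hap : ∀ i j, 0 ≤ ap i j) (i : Fin n) :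
    ∃ j, ap i j * x j = b i ∨ x j = 0 ∧ an i j = b i := by
  obtain ⟨j, hj⟩ := (((sysSol_iff hap).1 hx).2 i).2.2
  exact ⟨j, hj.imp (hx.mul_le i j).antisymm
    fun ⟨h0, h⟩ => ⟨h0, (hx.le_of_eq_zero h0 i).antisymm h⟩⟩

lemma rhs_nonneg (hx : SysSol hm ap an b x) (hap : ∀ i j, 0 ≤ ap i j) (i : Fin n) : 0 ≤ b i :=
  (mul_nonneg (hap i ⟨0, hm⟩) (hx.1 ⟨0, hm⟩).1).trans (hx.mul_le i ⟨0, hm⟩)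

lemma resP_eq (hx : SysSol hm ap an b x) (hi : 0 < b i) (h : ap i j * x j = b i) :
    resP (b i) (ap i j) = x j := by
  rw [← h] at hi ⊢
  exact resP_mul_left (left_ne_zero_of_mul hi.ne') (hx.1 j).2

lemma feasiblePair (hx : SysSol hm ap an b x) (hap : ∀ i j, 0 ≤ ap i j)
    (han : ∀ i j, 0 ≤ an i j) :
    FeasiblePair ap an b ({j | x j ≠ 0} : Finset (Fin m)) ({j | x j = 0} : Finset (Fin m)) := by
  simp only [FeasiblePair, mem_filter_univ]
  refine ⟨?_, ?_, fun i => ⟨fun hi => ⟨fun j hj => ?_, fun j hj => ?_⟩, fun hi => ?_⟩⟩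
  · rw [union_comm, filter_union_filter_not_eq]
  · rw [inter_comm, ← disjoint_iff_inter_eq_empty]
    exact disjoint_filter_filter_not _ _ _
  · have hzero : ap i j * x j = 0 :=
      (hi ▸ hx.mul_le i j).antisymm (mul_nonneg (hap i j) (hx.1 j).1)
    exact (mul_eq_zero.1 hzero).resolve_right hj
  · exact (hi ▸ hx.le_of_eq_zero hj i).antisymm (han i j)
  · obtain ⟨j, hj | ⟨hj, hanj⟩⟩ := hx.exists_attained hap i
    · refine .inl ⟨j, right_ne_zero_of_mul (hj ▸ hi.ne'), ?_, fun h => ?_⟩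
      · exact hj ▸ mul_le_of_le_one_right (hap i j) (hx.1 j).2
      · exact (hx.resP_eq hi hj).trans_le (le_resP (hap h j) (hx.1 j).2 (hx.mul_le h j))
    · exact .inr ⟨j, hj, hanj, hx.le_of_eq_zero hj⟩

end SysSol

lemma sysSol_lowerOn {K : Set (Fin m)} (hx : SysSol hm ap an b x) (hap : ∀ i j, 0 ≤ ap i j)
    (hK : ∀ i, 0 < b i → (∃ j ∉ K, b i ≤ ap i j * x j) ∨
      ∃ j ∈ K, an i j = b i ∧ ∀ h, an h j ≤ b h) :
    SysSol hm ap an b (lowerOn K an b x) := by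
  have hle (j : Fin m) : lowerOn K an b x j ≤ x j := lowerOn_le (hx.1 j).1
  have hnonneg (j : Fin m) : 0 ≤ lowerOn K an b x j := lowerOn_nonneg (hx.1 j).1
  refine (sysSol_iff hap).2 ⟨fun j => ⟨hnonneg j, (hle j).trans (hx.1 j).2⟩,
    fun i => ⟨fun j => ?_, fun j hj => ?_, ?_⟩⟩
  · exact (mul_le_mul_of_nonneg_left (hle j) (hap i j)).trans (hx.mul_le i j)
  · by_cases h0 : x j = 0
    · exact hx.le_of_eq_zero h0 i
    · exact forall_le_of_lowerOn_eq_zero h0 hj i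
  · obtain hi | hi := (hx.rhs_nonneg hap i).eq_or_lt
    · exact ⟨⟨0, hm⟩, .inl (hi ▸ mul_nonneg (hap i _) (hnonneg _))⟩
    · obtain ⟨j, hjK, hj⟩ | ⟨j, hjK, hj, hanj⟩ := hK i hi
      · exact ⟨j, .inl (by rwa [lowerOn_of_notMem hjK])⟩
      · exact ⟨j, .inr ⟨lowerOn_of_forall_le hjK hanj, hj.ge⟩⟩

lemma eq_zero_of_minimal_sysSol {K : Set (Fin m)} (hx : Minimal (SysSol hm ap an b) x)
    (hap : ∀ i j, 0 ≤ ap i j)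
    (hK : ∀ i, 0 < b i → (∃ j ∉ K, b i ≤ ap i j * x j) ∨
      ∃ j ∈ K, an i j = b i ∧ ∀ h, an h j ≤ b h) (hj : j ∈ K) : x j = 0 := by
  have hnonneg (k : Fin m) : 0 ≤ x k := (hx.prop.1 k).1
  by_contra h0
  have hlt : lowerOn K an b x j < x j := lowerOn_lt hj ((hnonneg j).lt_of_ne' h0)
  exact hlt.not_ge (hx.le_of_le (sysSol_lowerOn hx.prop hap hK) (fun k => lowerOn_le (hnonneg k)) j)

lemma exists_mul_eq_of_minimal_sysSol (hx : Minimal (SysSol hm ap an b) x)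
    (hap : ∀ i j, 0 ≤ ap i j) (hj : x j ≠ 0) : ∃ i, 0 < b i ∧ ap i j * x j = b i := by
  by_contra! hslack
  refine hj (eq_zero_of_minimal_sysSol (K := insert j {k | x k = 0}) hx hap (fun i hi => ?_)
    (Set.mem_insert _ _))
  obtain ⟨k, hk | ⟨hk, hank⟩⟩ := hx.prop.exists_attained hap i
  · have hkj : k ≠ j := fun h => hslack i hi (h ▸ hk)
    have hk0 : x k ≠ 0 := right_ne_zero_of_mul (hk ▸ hi.ne')
    exact .inl ⟨k, fun h => h.elim hkj hk0, hk.ge⟩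
  · exact .inr ⟨k, .inr hk, hank, hx.prop.le_of_eq_zero hk⟩

lemma le_mul_of_minimal_sysSol (hx : Minimal (SysSol hm ap an b) x) (hap : ∀ i j, 0 ≤ ap i j)
    (hj : x j ≠ 0) (hi : 0 < b i) (hle : b i ≤ ap i j)
    (hres : ∀ h, resP (b i) (ap i j) ≤ resP (b h) (ap h j)) : b i ≤ ap i j * x j := by
  obtain ⟨h, hh, heq⟩ := exists_mul_eq_of_minimal_sysSol hx hap hj
  calc b i = ap i j * resP (b i) (ap i j) := (mul_resP (hi.trans_le hle) hle).symm
    _ ≤ ap i j * resP (b h) (ap h j) := mul_le_mul_of_nonneg_left (hres h) (hap i j)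
    _ = ap i j * x j := by rw [hx.prop.resP_eq hh heq]

lemma FeasiblePair.eq_zero_of_mem {Jp K : Finset (Fin m)}
    (hF : FeasiblePair ap an b Jp K) (hx : Minimal (SysSol hm ap an b) x)
    (hap : ∀ i j, 0 ≤ ap i j) (hzero : ∀ j, x j = 0 → j ∈ K) (hj : j ∈ K) : x j = 0 := by
  obtain ⟨-, hdisj, hF⟩ := hF
  refine eq_zero_of_minimal_sysSol (K := K) hx hap (fun i hi => ?_) hj
  refine ((hF i).2 hi).imp_left fun ⟨k, hk, hle, hres⟩ => ?_
  have hkK : k ∉ K := disjoint_left.1 (disjoint_iff_inter_eq_empty.2 hdisj) hk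
  exact ⟨k, hkK, le_mul_of_minimal_sysSol hx hap (fun h0 => hkK (hzero k h0)) hi hle hres⟩

end Solutions

theorem stmt19_general {m n : ℕ} {hm : 0 < m} {ap an : Fin n → Fin m → ℝ} {b : Fin n → ℝ}
    {x : Fin m → ℝ} (hap : ∀ i j, 0 ≤ ap i j) (han : ∀ i j, 0 ≤ an i j)
    (hx : Minimal (SysSol hm ap an b) x) :
    Maximal (fun K => ∃ Jp, FeasiblePair ap an b Jp K) ({j | x j = 0} : Finset (Fin m)) := by
  refine ⟨⟨_, hx.prop.feasiblePair hap han⟩, fun K ⟨Jp, hF⟩ hsub j hj => ?_⟩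
  have hzero (k : Fin m) (hk : x k = 0) : k ∈ K := hsub (mem_filter_univ k |>.2 hk)
  exact mem_filter_univ j |>.2 (hF.eq_zero_of_mem hx hap hzero hj)

theorem stmt19 (m n : ℕ) (hm : 0 < m) (hn : 0 < n)
    (ap an : Fin n → Fin m → ℝ) (b : Fin n → ℝ)
    (hap : ∀ i j, ap i j ∈ Set.Icc (0:ℝ) 1) (han : ∀ i j, an i j ∈ Set.Icc (0:ℝ) 1)
    (hb : ∀ i, b i ∈ Set.Icc (0:ℝ) 1)
    (hsolv : ∃ x, SysSol hm ap an b x)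
    (xhat : Fin m → ℝ)
    (hsol : SysSol hm ap an b xhat)
    (hmin : ∀ y, SysSol hm ap an b y → ¬ y < xhat) :
    (∃ Jp, FeasiblePair ap an b Jp (Finset.univ.filter (fun j => xhat j = 0))) ∧
      ∀ K : Finset (Fin m), (∃ Jp, FeasiblePair ap an b Jp K) →
        ¬ (Finset.univ.filter (fun j => xhat j = 0)) ⊂ K := by
  have hmax := stmt19_general (fun i j => (hap i j).1) (fun i j => (han i j).1)
    (minimal_iff_forall_lt.2 ⟨hsol, fun y hlt hy => hmin y hy hlt⟩)
  exact ⟨hmax.prop, fun K hK => hmax.not_gt hK⟩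
end
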